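/- Let ℛ be a Riemann-like 4-linear form on Minkowski space V, n a unit timelike vector, h the spatial metric, ε the spatial volume form, and define the spatial parts Y(ℛ)(x,y) := ℛ(x,n,y,n), Z(ℛ)(x,y) := (*ℛ)(x,n,y,n), X(ℛ)(x,y) := (*ℛ*)(x,n,y,n) (where *ℛ* denotes the left dual of the right dual). Then ℛ is reconstructed by the identity ℛ_{αβγδ} = 2 n_γ n_{[α} Y(ℛ)_{β]δ} + 2 h_{α[δ} X(ℛ)_{γ]β} + 2 n_δ n_{[β} Y(ℛ)_{α]γ} + 2 n_{[δ} Z(ℛ)^{ρ}_{ γ]} ε_{αβρ} + 2 n_{[β} Z(ℛ)^{ρ}_{ α]} ε_{γδρ} + h_{βδ}( h_{αγ} X(ℛ)^{ρ}_{ ρ} − X(ℛ)_{αγ} ) + h_{βγ}( X(ℛ)_{αδ} − h_{αδ} X(ℛ)^{ρ}_{ ρ} ), where square brackets denote antisymmetrization with weight ½ and indices are raised with η. -/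

import Mathlib

noncomputable section

/-- Minkowski space `V = ℝ⁴`. -/
abbrev V4 : Type := Fin 4 → ℝ

/-- The Minkowski bilinear form of signature `(-,+,+,+)`. -/
def η (x y : V4) : ℝ := -(x 0 * y 0) + x 1 * y 1 + x 2 * y 2 + x 3 * y 3

/-- The standard basis of `V4`. -/
def e4 (a : Fin 4) : V4 := Pi.single a 1

/-- Components of the Minkowski metric `diag(-1,1,1,1)` (its own inverse). -/
def ηm (a b : Fin 4) : ℝ := if a = b then (if a = (0 : Fin 4) then -1 else 1) else 0

/-- A 4-linear form on `V4`, given by its components in the standard basis. -/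
abbrev T4 : Type := Fin 4 → Fin 4 → Fin 4 → Fin 4 → ℝ

/-- A bilinear form on `V4`, given by its components in the standard basis. -/
abbrev T2 : Type := Fin 4 → Fin 4 → ℝ

/-- Evaluation of a 4-linear form (given by components) on vectors. -/
def eval4 (W : T4) (x y z w : V4) : ℝ :=
  ∑ a : Fin 4, ∑ b : Fin 4, ∑ c : Fin 4, ∑ d : Fin 4, W a b c d * x a * y b * z c * w d

/-- The alternating volume 4-form with `vol(e₀,e₁,e₂,e₃) = 1`. -/
def volv (x y z w : V4) : ℝ := Matrix.det (Matrix.of ![x, y, z, w])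

/-- Components `η_{αβγδ}` of the volume form. -/
def volc (a b c d : Fin 4) : ℝ := volv (e4 a) (e4 b) (e4 c) (e4 d)

/-- Left dual `(*W)_{μνλρ} = ½ η_{μν}{}^{αβ} W_{αβλρ}`. -/
def leftDual (W : T4) : T4 := fun μ ν lam ρ =>
  (1/2) * ∑ γ : Fin 4, ∑ δ : Fin 4, ∑ a : Fin 4, ∑ b : Fin 4,
    volc μ ν γ δ * ηm γ a * ηm δ b * W a b lam ρ

/-- Right dual `(W*)_{μνλρ} = ½ W_{μν}{}^{αβ} η_{αβλρ}`. -/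
def rightDual (W : T4) : T4 := fun μ ν lam ρ =>
  (1/2) * ∑ γ : Fin 4, ∑ δ : Fin 4, ∑ a : Fin 4, ∑ b : Fin 4,
    W μ ν a b * ηm a γ * ηm b δ * volc γ δ lam ρ

/-- A Weyl candidate: pair antisymmetries, pair exchange, first Bianchi, trace-free. -/
def IsWeyl (W : T4) : Prop :=
  (∀ x y z w : V4, eval4 W x y z w = - eval4 W y x z w) ∧
  (∀ x y z w : V4, eval4 W x y z w = - eval4 W x y w z) ∧
  (∀ x y z w : V4, eval4 W x y z w = eval4 W z w x y) ∧
  (∀ x y z w : V4, eval4 W x y z w + eval4 W x z w y + eval4 W x w y z = 0) ∧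
  (∀ x y : V4, ∑ a : Fin 4, ∑ b : Fin 4, ηm a b * eval4 W (e4 a) x (e4 b) y = 0)

/-- Electric part `E(W)_{ab} = W(e_a, n, e_b, n)`. -/
def Epart (W : T4) (n : V4) : T2 := fun a b => eval4 W (e4 a) n (e4 b) n

/-- Magnetic part `B(W)_{ab} = (W*)(e_a, n, e_b, n)`. -/
def Bpart (W : T4) (n : V4) : T2 := fun a b => eval4 (rightDual W) (e4 a) n (e4 b) n

/-- Raise both indices of a bilinear form's components. -/
def up2 (S : T2) : T2 := fun a b => ∑ c : Fin 4, ∑ d : Fin 4, ηm a c * ηm b d * S c d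

/-- Full contraction `S_{ab} T^{ab}`. -/
def contr2 (S T : T2) : ℝ := ∑ a : Fin 4, ∑ b : Fin 4, S a b * up2 T a b

/-- A Riemann-like 4-linear form: pair antisymmetries, pair-exchange symmetry and
the first Bianchi identity. -/
def IsRiemannLike (R : T4) : Prop :=
  (∀ x y z w : V4, eval4 R x y z w = - eval4 R y x z w) ∧
  (∀ x y z w : V4, eval4 R x y z w = - eval4 R x y w z) ∧
  (∀ x y z w : V4, eval4 R x y z w = eval4 R z w x y) ∧
  (∀ x y z w : V4, eval4 R x y z w + eval4 R x z w y + eval4 R x w y z = 0)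

/-- The contraction `ω(e_a, n)` of a bilinear form with a vector in the second slot. -/
def contractVec (ω : T2) (n : V4) (a : Fin 4) : ℝ := ∑ i : Fin 4, ω a i * n i

/-- The Hodge dual of a 2-form. -/
def hodge (ω : T2) : T2 := fun a b =>
  (1/2) * ∑ c : Fin 4, ∑ d : Fin 4, volc a b c d * ηm c c * ηm d d * ω c d

theorem sum_ηm_mul (a : Fin 4) (f : Fin 4 → ℝ) : ∑ b : Fin 4, ηm a b * f b = ηm a a * f a :=
  Finset.sum_eq_single a (fun b _ hb => by simp [ηm, hb.symm]) (by simp)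

theorem ηm_comm (a b : Fin 4) : ηm a b = ηm b a := by
  unfold ηm; grind

theorem sum_e4_mul (a : Fin 4) (f : Fin 4 → ℝ) : ∑ b : Fin 4, f b * e4 a b = f a := by
  simp [e4, Pi.single_apply]

theorem volv_eq (x y z w : V4) : volv x y z w =
    x 0 * (y 1 * (z 2 * w 3 - z 3 * w 2) - y 2 * (z 1 * w 3 - z 3 * w 1)
      + y 3 * (z 1 * w 2 - z 2 * w 1))
    - x 1 * (y 0 * (z 2 * w 3 - z 3 * w 2) - y 2 * (z 0 * w 3 - z 3 * w 0)
      + y 3 * (z 0 * w 2 - z 2 * w 0))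
    + x 2 * (y 0 * (z 1 * w 3 - z 3 * w 1) - y 1 * (z 0 * w 3 - z 3 * w 0)
      + y 3 * (z 0 * w 1 - z 1 * w 0))
    - x 3 * (y 0 * (z 1 * w 2 - z 2 * w 1) - y 1 * (z 0 * w 2 - z 2 * w 0)
      + y 2 * (z 0 * w 1 - z 1 * w 0)) := by
  simp [volv, Matrix.det_succ_row_zero, Fin.sum_univ_succ, Fin.succAbove]
  ring

theorem volc_pair_comm (a b c d : Fin 4) : volc a b c d = volc c d a b := by
  simp only [volc, volv_eq]; ring

theorem volc_swap (a b c d : Fin 4) : volc a b c d = -volc b a c d := by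
  simp only [volc, volv_eq]; ring

theorem hodge_swap (ω : T2) (a b : Fin 4) : hodge ω a b = -hodge ω b a := by
  simp only [hodge, volc_swap a b, neg_mul, Finset.sum_neg_distrib, mul_neg]

theorem leftDual_eq_hodge (W : T4) (a b c d : Fin 4) :
    leftDual W a b c d = hodge (fun i j => W i j c d) a b := by
  simp only [leftDual, hodge]
  congr 1
  refine Finset.sum_congr rfl fun γ _ => Finset.sum_congr rfl fun δ _ => ?_
  simp only [mul_assoc, ← Finset.mul_sum, sum_ηm_mul δ]
  rw [sum_ηm_mul γ (fun i => ηm δ δ * W i δ c d)]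

theorem rightDual_eq_hodge (W : T4) (a b c d : Fin 4) :
    rightDual W a b c d = hodge (W a b) c d := by
  simp only [rightDual, hodge]
  congr 1
  refine Finset.sum_congr rfl fun γ _ => Finset.sum_congr rfl fun δ _ => ?_
  simp only [ηm_comm _ γ, ηm_comm _ δ, volc_pair_comm γ δ]
  calc
    _ = volc c d γ δ * ∑ i, ηm γ i * ∑ j, ηm δ j * W a b i j := by
      simp only [Finset.mul_sum]
      exact Finset.sum_congr rfl fun i _ => Finset.sum_congr rfl fun j _ => by ring
    _ = _ := by
      simp only [sum_ηm_mul δ]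
      rw [sum_ηm_mul γ (fun i => ηm δ δ * W a b i δ)]
      ring

theorem hodge_hodge_comm (W : T4) (a b c d : Fin 4) :
    hodge (fun i j => hodge (W i j) c d) a b
      = hodge (fun k l => hodge (fun i j => W i j k l) a b) c d := by
  simp only [hodge, Fin.sum_univ_four]
  ring

theorem eval4_basis (W : T4) (a b c d : Fin 4) :
    eval4 W (e4 a) (e4 b) (e4 c) (e4 d) = W a b c d := by
  calc
    _ = ∑ i, (∑ j, (∑ k, (∑ l, W i j k l * e4 d l) * e4 c k) * e4 b j) * e4 a i := by
      simp only [eval4, Finset.sum_mul]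
      refine Finset.sum_congr rfl fun i _ => Finset.sum_congr rfl fun j _ =>
        Finset.sum_congr rfl fun k _ => Finset.sum_congr rfl fun l _ => by ring
    _ = _ := by simp only [sum_e4_mul]

theorem eval4_eq_contractVec (W : T4) (n : V4) (a b : Fin 4) :
    eval4 W (e4 a) n (e4 b) n = contractVec (fun i j => contractVec (W i j) n b) n a := by
  simp only [eval4, contractVec]
  calc
    _ = ∑ i, (∑ j, (∑ k, (∑ l, W i j k l * n l) * e4 b k) * n j) * e4 a i := by
      simp only [Finset.sum_mul]
      refine Finset.sum_congr rfl fun i _ => Finset.sum_congr rfl fun j _ =>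
        Finset.sum_congr rfl fun k _ => Finset.sum_congr rfl fun l _ => by ring
    _ = _ := by simp only [sum_e4_mul]

theorem hodge_contractVec (W : T4) (n : V4) (a b c : Fin 4) :
    hodge (fun i j => contractVec (W i j) n c) a b
      = contractVec (fun k l => hodge (fun i j => W i j k l) a b) n c := by
  simp only [hodge, contractVec, Fin.sum_univ_four]
  ring

theorem eval4_leftDual (W : T4) (n : V4) (a b : Fin 4) :
    eval4 (leftDual W) (e4 a) n (e4 b) n
      = contractVec (hodge fun i j => contractVec (W i j) n b) n a := by
  rw [eval4_eq_contractVec]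
  refine Finset.sum_congr rfl fun i _ => ?_
  rw [hodge_contractVec]
  simp only [contractVec, leftDual_eq_hodge]

theorem sum_contractVec_mul_self (ω : T2) (hω : ∀ a b, ω a b = -ω b a) (n : V4) :
    ∑ a : Fin 4, contractVec ω n a * n a = 0 := by
  have hneg : ∑ a, contractVec ω n a * n a = -∑ a, contractVec ω n a * n a := by
    simp only [contractVec, Finset.sum_mul, ← Finset.sum_neg_distrib]
    rw [Finset.sum_comm]
    exact Finset.sum_congr rfl fun i _ => Finset.sum_congr rfl fun j _ => by rw [hω j i]; ring
  linarith

theorem hodge_components (ω : T2) (hω : ∀ a b, ω a b = -ω b a) :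
    hodge ω 0 1 = ω 2 3 ∧ hodge ω 0 2 = -ω 1 3 ∧ hodge ω 0 3 = ω 1 2 ∧
      hodge ω 1 2 = -ω 0 3 ∧ hodge ω 1 3 = ω 0 2 ∧ hodge ω 2 3 = -ω 0 1 := by
  refine ⟨?_, ?_, ?_, ?_, ?_, ?_⟩ <;>
    simp [hodge, Fin.sum_univ_four, volc, volv_eq, ηm, e4,
      hω 1 0, hω 2 0, hω 3 0, hω 2 1, hω 3 1, hω 3 2] <;> ring

/-- A 2-form is determined by its electric and magnetic parts. -/
theorem two_form_decomposition (ω : T2) (hω : ∀ a b, ω a b = -ω b a) (n : V4) (hn : η n n = -1)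
    (a b : Fin 4) :
    ω a b = η n (e4 a) * contractVec ω n b - η n (e4 b) * contractVec ω n a
      - ∑ c : Fin 4, ηm c c * contractVec (hodge ω) n c * volv n (e4 a) (e4 b) (e4 c) := by
  have hdiag : ∀ (τ : T2), (∀ a b, τ a b = -τ b a) → ∀ c, τ c c = 0 :=
    fun τ hτ c => by linarith [hτ c c]
  obtain ⟨h01, h02, h03, h12, h13, h23⟩ := hodge_components ω hω
  have hs := hodge_swap ω
  have hhom : -η n n * ω a b
      = η n (e4 a) * contractVec ω n b - η n (e4 b) * contractVec ω n a
        - ∑ c : Fin 4, ηm c c * contractVec (hodge ω) n c * volv n (e4 a) (e4 b) (e4 c) := by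
    simp only [contractVec, Fin.sum_univ_four, hdiag _ hs, hs 1 0, hs 2 0, hs 3 0, hs 2 1, hs 3 1,
      hs 3 2, h01, h02, h03, h12, h13, h23, η, volv_eq]
    fin_cases a <;> fin_cases b <;>
      simp [ηm, e4, hdiag ω hω, hω 1 0, hω 2 0, hω 3 0, hω 2 1, hω 3 1, hω 3 2] <;> ring
  rw [hn] at hhom
  linarith

/-- The product of two spatial volume forms is a Gram determinant of the spatial metric. -/
theorem volv_mul_volv (n : V4) (hn : η n n = -1) (h : V4 → V4 → ℝ)
    (hh : ∀ x y, h x y = η x y + η n x * η n y) (x y z u v w : V4) :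
    volv n x y z * volv n u v w =
      h x u * (h y v * h z w - h y w * h z v) - h x v * (h y u * h z w - h y w * h z u)
        + h x w * (h y u * h z v - h y v * h z u) := by
  have hc : ∀ x, η x n = η n x := fun x => by simp only [η]; ring
  have hdet : volv n x y z * volv n u v w = -Matrix.det
      (Matrix.of ![n, x, y, z] * Matrix.diagonal ![-1, 1, 1, 1] * (Matrix.of ![n, u, v, w]).transpose) := by
    rw [Matrix.det_mul, Matrix.det_mul, Matrix.det_transpose, Matrix.det_diagonal]
    simp [volv, Fin.prod_univ_four]
  have hgram : Matrix.of ![n, x, y, z] * Matrix.diagonal ![-1, 1, 1, 1]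
      * (Matrix.of ![n, u, v, w]).transpose
      = Matrix.of ![![η n n, η n u, η n v, η n w], ![η n x, η x u, η x v, η x w],
          ![η n y, η y u, η y v, η y w], ![η n z, η z u, η z v, η z w]] := by
    simp only [← hc x, ← hc y, ← hc z]
    ext i j
    fin_cases i <;> fin_cases j <;>
      simp [Matrix.mul_apply (N := Matrix.transpose _), Matrix.vecMul_diagonal,
        Fin.sum_univ_four, η]
  have hvol := volv_eq ![η n n, η n u, η n v, η n w] ![η n x, η x u, η x v, η x w]
    ![η n y, η y u, η y v, η y w] ![η n z, η z u, η z v, η z w]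
  simp only [volv] at hvol
  rw [hdet, hgram, hvol, hn]
  simp [hh]
  ring

theorem η_e4_right (n : V4) (a : Fin 4) : η n (e4 a) = ηm a a * n a := by
  fin_cases a <;> simp [η, e4, ηm]

theorem η_e4_e4 (a b : Fin 4) : η (e4 a) (e4 b) = ηm a b := by
  fin_cases a <;> fin_cases b <;> simp [η, e4, ηm]

/-- Contracting with the spatial metric fixes covectors that annihilate `n`. -/
theorem sum_spatialMetric (n : V4) (f : Fin 4 → ℝ) (hf : ∑ c, f c * n c = 0) (a : Fin 4) :
    ∑ c : Fin 4, ηm c c * f c * (ηm a c + η n (e4 a) * η n (e4 c)) = f a := by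
  have hsq : ∀ c, ηm c c * ηm c c = 1 := fun c => by by_cases hc : c = 0 <;> simp [ηm, hc]
  calc
    _ = ∑ c, ηm a c * (ηm c c * f c) + η n (e4 a) * ∑ c, f c * n c := by
      rw [Finset.mul_sum, ← Finset.sum_add_distrib]
      refine Finset.sum_congr rfl fun c _ => ?_
      rw [η_e4_right n c]
      linear_combination (η n (e4 a) * f c * n c) * hsq c
    _ = f a := by
      rw [sum_ηm_mul, hf]
      linear_combination f a * hsq a

/-- Contraction of two spatial volume forms with a spatial symmetric bilinear form. -/
theorem sum_volv_mul_volv (n : V4) (hn : η n n = -1) (h : T2)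
    (hh : ∀ a b, h a b = ηm a b + η n (e4 a) * η n (e4 b)) (X : T2)
    (hsymm : ∀ a b, X a b = X b a) (hX : ∀ a, contractVec X n a = 0) (a b c d : Fin 4) :
    ∑ r : Fin 4, ∑ s : Fin 4, ηm r r * ηm s s * X r s
        * (volv n (e4 a) (e4 b) (e4 r) * volv n (e4 c) (e4 d) (e4 s))
      = (h a c * h b d - h a d * h b c) * ∑ r : Fin 4, ηm r r * X r r
        - h a c * X d b + h a d * X c b - h b d * X a c + h b c * X a d := by
  have hcomm : ∀ a b, h a b = h b a := fun a b => by rw [hh, hh, ηm_comm]; ring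
  have hinner : ∀ r b, ∑ s, ηm s s * X r s * h b s = X r b := fun r b => by
    simpa only [hh] using sum_spatialMetric n (X r) (hX r) b
  have htrace : ∑ r, ∑ s, ηm r r * ηm s s * X r s * h r s = ∑ r, ηm r r * X r r := by
    refine Finset.sum_congr rfl fun r _ => ?_
    rw [← hinner r r, Finset.mul_sum]
    exact Finset.sum_congr rfl fun s _ => by ring
  have hcontr : ∀ a b, ∑ r, ∑ s, ηm r r * ηm s s * X r s * (h b s * h r a) = X a b := by
    intro a b
    rw [hsymm a b, ← hinner b a]
    refine Finset.sum_congr rfl fun r _ => ?_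
    rw [hsymm b r, ← hinner r b, Finset.mul_sum, Finset.sum_mul]
    exact Finset.sum_congr rfl fun s _ => by rw [hcomm a r]; ring
  have hvol : ∀ r s, volv n (e4 a) (e4 b) (e4 r) * volv n (e4 c) (e4 d) (e4 s) =
      h a c * (h b d * h r s - h b s * h r d) - h a d * (h b c * h r s - h b s * h r c)
        + h a s * (h b c * h r d - h b d * h r c) := fun r s => by
    rw [volv_mul_volv n hn _ (fun _ _ => rfl)]
    simp only [hh, η_e4_e4]
  rw [← htrace, hsymm a c, hsymm a d, ← hcontr d b, ← hcontr c b, ← hcontr c a, ← hcontr d a]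
  simp only [hvol, Finset.mul_sum, ← Finset.sum_sub_distrib, ← Finset.sum_add_distrib]
  exact Finset.sum_congr rfl fun r _ => Finset.sum_congr rfl fun s _ => by ring

/-- a Riemann-like tensor is reconstructed from its spatial parts
`X(ℛ)`, `Y(ℛ)`, `Z(ℛ)`. -/
theorem stmt_12 (R : T4) (hR : IsRiemannLike R) (n : V4) (hn : η n n = -1)
    (nl : Fin 4 → ℝ) (hnl : ∀ μ, nl μ = η n (e4 μ))
    (h : T2) (hh : h = fun a b => ηm a b + nl a * nl b)
    (εc : Fin 4 → Fin 4 → Fin 4 → ℝ)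
    (hεc : ∀ a b c, εc a b c = volv n (e4 a) (e4 b) (e4 c))
    (X Y Z : T2)
    (hX : X = fun a b => eval4 (leftDual (rightDual R)) (e4 a) n (e4 b) n)
    (hY : Y = fun a b => eval4 R (e4 a) n (e4 b) n)
    (hZ : Z = fun a b => eval4 (leftDual R) (e4 a) n (e4 b) n)
    (trX : ℝ) (htrX : trX = ∑ ρ : Fin 4, ∑ ρ' : Fin 4, ηm ρ ρ' * X ρ ρ') :
    ∀ α β γ δ, R α β γ δ =
      2 * nl γ * ((1/2) * (nl α * Y β δ - nl β * Y α δ))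
      + 2 * ((1/2) * (h α δ * X γ β - h α γ * X δ β))
      + 2 * nl δ * ((1/2) * (nl β * Y α γ - nl α * Y β γ))
      + 2 * ((1/2) * (∑ ρ : Fin 4, ∑ ρ' : Fin 4,
          (nl δ * ηm ρ ρ' * Z ρ' γ - nl γ * ηm ρ ρ' * Z ρ' δ) * εc α β ρ))
      + 2 * ((1/2) * (∑ ρ : Fin 4, ∑ ρ' : Fin 4,
          (nl β * ηm ρ ρ' * Z ρ' α - nl α * ηm ρ ρ' * Z ρ' β) * εc γ δ ρ))
      + h β δ * (h α γ * trX - X α γ)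
      + h β γ * (X α δ - h α δ * trX) := by
  obtain ⟨hfst, hsnd, hpair, -⟩ := hR
  replace hfst : ∀ a b c d, R a b c d = -R b a c d := fun a b c d => by
    simpa only [eval4_basis] using hfst (e4 a) (e4 b) (e4 c) (e4 d)
  replace hsnd : ∀ a b c d, R a b c d = -R a b d c := fun a b c d => by
    simpa only [eval4_basis] using hsnd (e4 a) (e4 b) (e4 c) (e4 d)
  replace hpair : ∀ a b c d, R a b c d = R c d a b := fun a b c d => by
    simpa only [eval4_basis] using hpair (e4 a) (e4 b) (e4 c) (e4 d)
  have hdual : ∀ i j, rightDual R i j = hodge (R i j) := fun i j => by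
    ext k l; exact rightDual_eq_hodge R i j k l
  have hYcontr : ∀ a b, contractVec (fun i j => contractVec (R i j) n b) n a = Y a b := fun a b => by
    simp only [hY, eval4_eq_contractVec]
  have hZdual : ∀ a b, contractVec (hodge fun i j => contractVec (R i j) n b) n a = Z a b :=
    fun a b => by simp only [hZ, eval4_leftDual]
  have hXdual : ∀ a b,
      contractVec (hodge fun i j => contractVec (hodge (R i j)) n b) n a = X a b := fun a b => by
    simp only [hX, eval4_leftDual, hdual]
  have hZt : ∀ a b, contractVec (fun i j => contractVec (hodge (R i j)) n b) n a = Z b a := by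
    intro a b
    have hrow : ∀ j, (fun k l => R k l a j) = R a j := fun j => by
      ext k l; exact hpair k l a j
    simp only [hZ, eval4_eq_contractVec, contractVec, leftDual_eq_hodge, hrow, Finset.sum_mul]
    rw [Finset.sum_comm]
    exact Finset.sum_congr rfl fun i _ => Finset.sum_congr rfl fun j _ => by ring
  have hXsymm : ∀ a b, X a b = X b a := by
    intro a b
    have hswap : ∀ i j k l, hodge (fun p q => hodge (R p q) k l) i j
        = hodge (fun p q => hodge (R p q) i j) k l := fun i j k l => by
      rw [hodge_hodge_comm]
      congr 1
      ext p q
      congr 1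
      ext r s
      exact hpair r s p q
    have hsum : ∀ a b, X a b
        = ∑ i, ∑ j, hodge (fun p q => hodge (R p q) b j) a i * n j * n i := fun a b => by
      rw [← hXdual, contractVec]
      refine Finset.sum_congr rfl fun i _ => ?_
      rw [hodge_contractVec (fun i j => hodge (R i j)), contractVec, Finset.sum_mul]
    rw [hsum, hsum, Finset.sum_comm]
    exact Finset.sum_congr rfl fun i _ => Finset.sum_congr rfl fun j _ => by rw [hswap]; ring
  have hXn : ∀ a, contractVec X n a = 0 := fun a => by
    have hXa : ∀ b, X a b = contractVec (hodge fun i j => contractVec (hodge (R i j)) n a) n b :=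
      fun b => by rw [hXsymm, hXdual]
    rw [contractVec]
    simp only [hXa]
    exact sum_contractVec_mul_self _ (hodge_swap _) n
  have hsumη : ∀ (f g : Fin 4 → ℝ),
      ∑ r, ∑ s, ηm r s * f s * g r = ∑ r, ηm r r * f r * g r := fun f g =>
    Finset.sum_congr rfl fun r _ => by rw [← Finset.sum_mul, sum_ηm_mul]
  intro α β γ δ
  have hfull := two_form_decomposition (R α β) (hsnd α β) n hn γ δ
  have helectric : ∀ c, contractVec (R α β) n c
      = nl α * Y β c - nl β * Y α c - ∑ r, ηm r r * Z r c * εc α β r := fun c => by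
    have := two_form_decomposition (fun i j => contractVec (R i j) n c)
      (fun i j => by simp only [contractVec, hfst i j, neg_mul, Finset.sum_neg_distrib]) n hn α β
    simpa only [hYcontr, hZdual, ← hnl, ← hεc] using this
  have hmagnetic : ∀ c, contractVec (hodge (R α β)) n c
      = nl α * Z c β - nl β * Z c α - ∑ r, ηm r r * X r c * εc α β r := fun c => by
    have hneg : ∀ i j, R i j = fun k l => -R j i k l := fun i j => by ext k l; exact hfst i j k l
    have := two_form_decomposition (fun i j => contractVec (hodge (R i j)) n c)
      (fun i j => by
        simp only [contractVec, hodge, hneg i j, neg_mul, mul_neg, Finset.sum_neg_distrib]) n hn α β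
    simpa only [hZt, hXdual, ← hnl, ← hεc] using this
  have hεε := sum_volv_mul_volv n hn h (fun a b => by simp only [hh, hnl]) X hXsymm hXn α β γ δ
  have htr : trX = ∑ r, ηm r r * X r r :=
    htrX.trans (Finset.sum_congr rfl fun r _ => sum_ηm_mul r (X r))
  simp only [← hεc, ← htr] at hεε
  simp only [helectric, hmagnetic, ← hnl, ← hεc] at hfull
  have hZsum : ∀ a b c d, ∑ r, ∑ s, (nl b * ηm r s * Z s a - nl a * ηm r s * Z s b) * εc c d r
      = nl b * (∑ r, ηm r r * Z r a * εc c d r) - nl a * ∑ r, ηm r r * Z r b * εc c d r := by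
    intro a b c d
    rw [← hsumη, ← hsumη]
    simp only [Finset.mul_sum, ← Finset.sum_sub_distrib]
    exact Finset.sum_congr rfl fun r _ => Finset.sum_congr rfl fun s _ => by ring
  have hmagsum : ∑ s, ηm s s * (nl α * Z s β - nl β * Z s α - ∑ r, ηm r r * X r s * εc α β r)
        * εc γ δ s
      = nl α * (∑ s, ηm s s * Z s β * εc γ δ s) - nl β * (∑ s, ηm s s * Z s α * εc γ δ s)
        - ∑ r, ∑ s, ηm r r * ηm s s * X r s * (εc α β r * εc γ δ s) := by
    rw [Finset.sum_comm]
    simp only [Finset.mul_sum, ← Finset.sum_sub_distrib]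
    refine Finset.sum_congr rfl fun s _ => ?_
    rw [mul_sub, sub_mul, Finset.mul_sum, Finset.sum_mul]
    congr 1
    · ring
    · exact Finset.sum_congr rfl fun r _ => by ring
  rw [hmagsum, hεε] at hfull
  rw [hZsum, hZsum, hfull]
  ring
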